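/- Let (R,m,k) be a Noetherian local ring with residue field k, and let M and N be finitely generated R-modules. For each n ≥ 0, Σ_{i+j=n} β_i(M)·β_j(N) ≤ Σ_{i+j=n} β_j(Tor_i^R(M,N)), where β_i(X) = dim_k Tor_i^R(X,k) denotes the i-th Betti number of a finitely generated R-module X. -/

import Mathlib

/-!
STATEMENT 19: Let `(R, m, k)` be a Noetherian local ring and `M`, `N` finitely generated
`R`-modules. For every `n`, `Σ_{i+j=n} βᵢ(M)·βⱼ(N) ≤ Σ_{i+j=n} βⱼ(Tor_i^R(M, N))`, where
`βᵢ(X) = dim_k Tor_i^R(X, k)`.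

Since `Tor_i^R(X, k)` is a vector space over the residue field `k`, its `k`-dimension coincides
with its length as an `R`-module, which we use to express `dim_k` (`Order.height ⊤` in the
submodule lattice is the length of a module, as in Mathlib's `Module.length`).
-/

open CategoryTheory CategoryTheory.Limits

universe u

/-- The length of a module, as the height of `⊤` in its submodule lattice. -/
noncomputable def lengthOf (R : Type u) [CommRing R] (X : ModuleCat.{u} R) : ℕ∞ :=
  Order.height (⊤ : Submodule R X)

/-- The `i`-th Betti number of a module `X` over a Noetherian local ring `(R, m, k)`:
`βᵢ(X) = dim_k Tor_i^R(X, k)`, expressed as the length of the `R`-module `Tor_i^R(X, k)`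
(which is a `k`-vector space, so its length equals its `k`-dimension). -/
noncomputable def betti (R : Type u) [CommRing R] [IsLocalRing R] (i : ℕ)
    (X : ModuleCat.{u} R) : ℕ∞ :=
  lengthOf R (((Tor (ModuleCat.{u} R) i).obj X).obj
    (ModuleCat.of R (IsLocalRing.ResidueField R)))

open MonoidalCategory IsLocalRing TensorProduct
open Finset.HasAntidiagonal (antidiagonal mem_antidiagonal)

lemma lengthOf_eq_length (R : Type u) [CommRing R] (X : ModuleCat.{u} R) :
    lengthOf R X = Module.length R X :=
  (Module.length_eq_height R X).symm

lemma Module.length_le_add_of_exact {R M N P : Type*} [Ring R] [AddCommGroup M] [AddCommGroup N]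
    [AddCommGroup P] [Module R M] [Module R N] [Module R P] {f : M →ₗ[R] N} {g : N →ₗ[R] P}
    (h : Function.Exact f g) : Module.length R N ≤ Module.length R M + Module.length R P := by
  rw [Module.length_eq_add_of_exact (LinearMap.ker g).subtype g.rangeRestrict
    (Submodule.subtype_injective _) g.surjective_rangeRestrict
    (by rw [LinearMap.exact_iff]; simp)]
  have hker : LinearMap.ker g = LinearMap.range f := LinearMap.exact_iff.mp h
  rw [hker]
  exact add_le_add (Module.length_le_of_surjective f.rangeRestrict f.surjective_rangeRestrict)
    (Module.length_le_of_injective (LinearMap.range g).subtype (Submodule.subtype_injective _))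

lemma Module.injective_of_surjective_of_length_le {R M N : Type*} [Ring R] [AddCommGroup M]
    [AddCommGroup N] [Module R M] [Module R N] (g : M →ₗ[R] N) (hg : Function.Surjective g)
    (hfin : Module.length R M ≠ ⊤) (hle : Module.length R M ≤ Module.length R N) :
    Function.Injective g := by
  have h := Module.length_eq_add_of_exact (LinearMap.ker g).subtype g
    (Submodule.subtype_injective _) hg (by rw [LinearMap.exact_iff]; simp)
  have hker : Module.length R (LinearMap.ker g) = 0 := by
    by_contra hne
    have hN : Module.length R N ≠ ⊤ := fun hN ↦ hfin (by rw [h, hN, add_top])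
    have hK : Module.length R (LinearMap.ker g) ≠ ⊤ := fun hK ↦ hfin (by rw [h, hK, top_add])
    rw [h] at hle
    lift Module.length R N to ℕ using hN with n
    lift Module.length R (LinearMap.ker g) to ℕ using hK with k
    norm_cast at hle hne
    omega
  rw [Module.length_eq_zero_iff, Submodule.subsingleton_iff_eq_bot] at hker
  exact LinearMap.ker_eq_bot.mp hker

section TensorComplex

variable {R : Type u} [CommRing R]

/-- The complex `X ⊗ K`. -/
noncomputable abbrev tensorComplex (K : ChainComplex (ModuleCat.{u} R) ℕ) (X : ModuleCat.{u} R) :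
    ChainComplex (ModuleCat.{u} R) ℕ :=
  (((tensoringLeft (ModuleCat.{u} R)).obj X).mapHomologicalComplex _).obj K

/-- The map of complexes `X ⊗ K ⟶ Y ⊗ K` induced by `f : X ⟶ Y`. -/
noncomputable abbrev tensorComplexMap (K : ChainComplex (ModuleCat.{u} R) ℕ) {X Y : ModuleCat.{u} R}
    (f : X ⟶ Y) : tensorComplex K X ⟶ tensorComplex K Y :=
  (NatTrans.mapHomologicalComplex ((tensoringLeft (ModuleCat.{u} R)).map f) _).app K

/-- The complex `X₁ ⊗ K ⟶ X₂ ⊗ K ⟶ X₃ ⊗ K` obtained from `X₁ ⟶ X₂ ⟶ X₃`. -/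
noncomputable abbrev tensorComplexSC (K : ChainComplex (ModuleCat.{u} R) ℕ)
    (S : ShortComplex (ModuleCat.{u} R)) : ShortComplex (ChainComplex (ModuleCat.{u} R) ℕ) :=
  ShortComplex.mk (tensorComplexMap K S.f) (tensorComplexMap K S.g) (by
    ext i : 1
    change (S.f ▷ K.X i) ≫ (S.g ▷ K.X i) = 0
    rw [← comp_whiskerRight, S.zero, MonoidalPreadditive.zero_whiskerRight])

lemma tensorComplexSC_shortExact (K : ChainComplex (ModuleCat.{u} R) ℕ)
    [∀ i, Module.Flat R (K.X i)] {S : ShortComplex (ModuleCat.{u} R)} (hS : S.ShortExact) :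
    (tensorComplexSC K S).ShortExact :=
  HomologicalComplex.shortExact_of_degreewise_shortExact _ fun i ↦
    hS.map_of_exact (tensorRight (K.X i))

end TensorComplex

section Tor
variable {R : Type u} [CommRing R]

/-- The length of `Tor_j(X, L)`. -/
noncomputable def torLength (L : ModuleCat.{u} R) (j : ℕ) (X : ModuleCat.{u} R) : ℕ∞ :=
  Module.length R (((Tor (ModuleCat.{u} R) j).obj X).obj L)

lemma torLength_eq {L : ModuleCat.{u} R} (Q : ProjectiveResolution L) (j : ℕ)
    (X : ModuleCat.{u} R) :
    torLength L j X = Module.length R ((tensorComplex Q.complex X).homology j) :=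
  ((Q.isoLeftDerivedObj ((tensoringLeft (ModuleCat.{u} R)).obj X) j).toLinearEquiv).length_eq

lemma torLength_congr {L X Y : ModuleCat.{u} R} (j : ℕ) (e : X ≅ Y) :
    torLength L j X = torLength L j Y :=
  (((Tor (ModuleCat.{u} R) j).mapIso e).app L).toLinearEquiv.length_eq

lemma torLength_zero (L X : ModuleCat.{u} R) :
    torLength L 0 X = Module.length R (TensorProduct R X L) :=
  have : PreservesFiniteColimits ((tensoringLeft (ModuleCat.{u} R)).obj X) :=
    inferInstanceAs (PreservesFiniteColimits (tensorLeft X))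
  ((((tensoringLeft (ModuleCat.{u} R)).obj X).leftDerivedZeroIsoSelf).app L).toLinearEquiv.length_eq

instance (L : ModuleCat.{u} R) (Q : ProjectiveResolution L) (i : ℕ) :
    Module.Flat R (Q.complex.X i) :=
  have : Module.Projective R (Q.complex.X i) := (IsProjective.iff_projective _).mpr (Q.projective i)
  inferInstance

lemma torLength_le_add (L : ModuleCat.{u} R) (j : ℕ) {S : ShortComplex (ModuleCat.{u} R)}
    (hS : S.ShortExact) :
    torLength L j S.X₂ ≤ torLength L j S.X₁ + torLength L j S.X₃ := by
  let Q := projectiveResolution L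
  simp only [torLength_eq Q]
  have h := (tensorComplexSC_shortExact Q.complex hS).homology_exact₂ j
  rw [ShortComplex.ShortExact.moduleCat_exact_iff_function_exact] at h
  exact Module.length_le_add_of_exact h

lemma isZero_homology_tensorComplex_succ {L : ModuleCat.{u} R} (Q : ProjectiveResolution L)
    (X : ModuleCat.{u} R) [Module.Flat R X] (j : ℕ) :
    IsZero ((tensorComplex Q.complex X).homology (j + 1)) := by
  rw [← HomologicalComplex.exactAt_iff_isZero_homology,
    HomologicalComplex.exactAt_iff' _ (j + 2) (j + 1) j (by simp) (by simp)]
  have h := Q.complex_exactAt_succ j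
  rw [HomologicalComplex.exactAt_iff' _ (j + 2) (j + 1) j (by simp) (by simp)] at h
  rw [ShortComplex.ShortExact.moduleCat_exact_iff_function_exact] at h ⊢
  exact Module.Flat.lTensor_exact X h

lemma torLength_succ_le (L : ModuleCat.{u} R) (j : ℕ) {S : ShortComplex (ModuleCat.{u} R)}
    (hS : S.ShortExact) [Module.Flat R S.X₂] :
    torLength L (j + 1) S.X₃ ≤ torLength L j S.X₁ := by
  let Q := projectiveResolution L
  simp only [torLength_eq Q]
  have := (tensorComplexSC_shortExact Q.complex hS).mono_δ (j + 1) j (by simp)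
    (isZero_homology_tensorComplex_succ Q S.X₂ j)
  exact Module.length_le_of_injective _ ((ModuleCat.mono_iff_injective _).mp this)

lemma torLength_le_succ (L : ModuleCat.{u} R) (j : ℕ) {S : ShortComplex (ModuleCat.{u} R)}
    (hS : S.ShortExact) [Module.Flat R S.X₂] (hfin : torLength L 0 S.X₂ ≠ ⊤)
    (hle : torLength L 0 S.X₂ ≤ torLength L 0 S.X₃) :
    torLength L j S.X₁ ≤ torLength L (j + 1) S.X₃ := by
  let Q := projectiveResolution L
  simp only [torLength_eq Q] at *
  have hT := tensorComplexSC_shortExact Q.complex hS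
  cases j with
  | succ j =>
    have := hT.epi_δ (j + 2) (j + 1) (by simp) (isZero_homology_tensorComplex_succ Q S.X₂ j)
    exact Module.length_le_of_surjective _ ((ModuleCat.epi_iff_surjective _).mp this)
  | zero =>
    have h₁ := hT.homology_exact₁ 1 0 (by simp)
    have h₂ := hT.homology_exact₂ 0
    have hepi : Epi (HomologicalComplex.homologyMap (tensorComplexSC Q.complex S).g 0) := by
      have := hT.epi_g
      exact HomologicalComplex.epi_homologyMap_of_epi_of_not_rel _ 0 (by simp)
    rw [ModuleCat.epi_iff_surjective] at hepi
    rw [ShortComplex.ShortExact.moduleCat_exact_iff_function_exact] at h₁ h₂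
    have hinj : Function.Injective
        (HomologicalComplex.homologyMap (tensorComplexSC Q.complex S).g 0).hom :=
      Module.injective_of_surjective_of_length_le _ hepi hfin hle
    refine Module.length_le_of_surjective _ (fun x ↦ (h₁ x).mp (hinj ?_))
    rw [map_zero]
    exact h₂.apply_apply_eq_zero x

lemma betti_eq_torLength [IsLocalRing R] (i : ℕ) (X : ModuleCat.{u} R) :
    betti R i X = torLength (.of R (IsLocalRing.ResidueField R)) i X :=
  lengthOf_eq_length R _

attribute [irreducible] torLength

end Tor

section Lin
variable {R : Type u} [CommRing R]

lemma shortExact_of_linearMap {X Y Z : Type u} [AddCommGroup X] [AddCommGroup Y] [AddCommGroup Z]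
    [Module R X] [Module R Y] [Module R Z] (f : X →ₗ[R] Y) (g : Y →ₗ[R] Z)
    (hf : Function.Injective f) (hg : Function.Surjective g) (h : Function.Exact f g) :
    (ShortComplex.moduleCatMk f g h.linearMap_comp_eq_zero).ShortExact where
  exact := (ShortComplex.ShortExact.moduleCat_exact_iff_function_exact _).mpr h
  mono_f := (ModuleCat.mono_iff_injective _).mpr hf
  epi_g := (ModuleCat.epi_iff_surjective _).mpr hg

variable (L : ModuleCat.{u} R) {X Y : Type u} [AddCommGroup X] [AddCommGroup Y]
    [Module R X] [Module R Y]

lemma torLength_le_ker_add_range (j : ℕ) (f : X →ₗ[R] Y) :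
    torLength L j (.of R X) ≤ torLength L j (.of R (LinearMap.ker f)) +
      torLength L j (.of R (LinearMap.range f)) :=
  torLength_le_add L j (shortExact_of_linearMap (LinearMap.ker f).subtype f.rangeRestrict
    (Submodule.subtype_injective _) f.surjective_rangeRestrict
    (by rw [LinearMap.exact_iff]; simp))

lemma shortExact_submodule (P : Submodule R X) :
    (ShortComplex.moduleCatMk P.subtype P.mkQ
      (LinearMap.exact_subtype_mkQ P).linearMap_comp_eq_zero).ShortExact :=
  shortExact_of_linearMap P.subtype P.mkQ (Submodule.subtype_injective _) P.mkQ_surjective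
    (LinearMap.exact_subtype_mkQ P)

lemma torLength_submodule_le [Module.Flat R X] (P : Submodule R X) (j : ℕ)
    (hfin : torLength L 0 (.of R X) ≠ ⊤)
    (hle : torLength L 0 (.of R X) ≤ torLength L 0 (.of R (X ⧸ P))) :
    torLength L j (.of R P) ≤ torLength L (j + 1) (.of R (X ⧸ P)) :=
  have : Module.Flat R (ShortComplex.moduleCatMk P.subtype P.mkQ
      (LinearMap.exact_subtype_mkQ P).linearMap_comp_eq_zero).X₂ := ‹Module.Flat R X›
  torLength_le_succ L j (shortExact_submodule P) hfin hle

lemma torLength_le_ker [Module.Flat R X] (f : X →ₗ[R] Y) (hf : Function.Surjective f) (j : ℕ) :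
    torLength L (j + 1) (.of R Y) ≤ torLength L j (.of R (LinearMap.ker f)) :=
  have h := shortExact_of_linearMap (LinearMap.ker f).subtype f
    (Submodule.subtype_injective _) hf (LinearMap.exact_subtype_ker_map f)
  have : Module.Flat R (ShortComplex.moduleCatMk (LinearMap.ker f).subtype f
    (LinearMap.exact_subtype_ker_map f).linearMap_comp_eq_zero).X₂ := ‹Module.Flat R X›
  torLength_succ_le L j h

/-- Let `C` be a complex of flat modules with homology `H`, such that each quotient map
`C n → C n / im d` stays an isomorphism after tensoring with `L` (expressed through lengths).
Then the length of `Tor_j(C n / im d, L)` is bounded by the lengths of `Tor_{j+n-i}(H i, L)` for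
`i ≤ n`, by dimension shifting along `0 → H (n+1) → C (n+1) / im d → im d → 0`. -/
lemma torLength_opcycles_le {C : ℕ → Type u} [∀ n, AddCommGroup (C n)] [∀ n, Module R (C n)]
    [∀ n, Module.Flat R (C n)] (d : ∀ n, C (n + 1) →ₗ[R] C n)
    (hd : ∀ n, LinearMap.range (d (n + 1)) ≤ LinearMap.ker (d n))
    (hfin : ∀ n, torLength L 0 (.of R (C n)) ≠ ⊤)
    (hle : ∀ n, torLength L 0 (.of R (C n)) ≤
      torLength L 0 (.of R (C n ⧸ LinearMap.range (d n))))
    (H : ℕ → ModuleCat.{u} R) (e₀ : Nonempty ((C 0 ⧸ LinearMap.range (d 0)) ≃ₗ[R] H 0))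
    (e : ∀ n, Nonempty (LinearMap.ker ((LinearMap.range (d (n + 1))).liftQ (d n) (hd n)) ≃ₗ[R]
      H (n + 1))) (n j : ℕ) :
    torLength L j (.of R (C n ⧸ LinearMap.range (d n))) ≤
      ∑ i ∈ Finset.range (n + 1), torLength L (j + n - i) (H i) := by
  induction n generalizing j with
  | zero =>
    obtain ⟨e₀⟩ := e₀
    have h := torLength_congr (L := L) j (e₀.toModuleIso)
    simpa using h.le
  | succ n ih =>
    obtain ⟨e⟩ := e n
    have h := torLength_congr (L := L) j (e.toModuleIso)
    refine (torLength_le_ker_add_range L j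
      ((LinearMap.range (d (n + 1))).liftQ (d n) (hd n))).trans ?_
    rw [Finset.sum_range_succ, add_comm, h, Submodule.range_liftQ]
    refine add_le_add ?_ (by simp)
    refine (torLength_submodule_le L _ j (hfin n) (hle n)).trans ((ih (j + 1)).trans_eq ?_)
    exact Finset.sum_congr rfl fun i _ ↦ by rw [show j + 1 + n = j + (n + 1) by omega]

end Lin

section Local
variable {R : Type u} [CommRing R] [IsLocalRing R]

variable (R) in
/-- The residue field as an object of `ModuleCat R`. -/
noncomputable abbrev resField : ModuleCat.{u} R := .of R (ResidueField R)

lemma torLength_resField_zero_free (X : Type u) [AddCommGroup X] [Module R X] [Module.Free R X]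
    [Module.Finite R X] : torLength (resField R) 0 (.of R X) = Module.finrank R X := by
  rw [torLength_zero]
  have e : (X ⊗[R] ResidueField R) ≃ₗ[R] (Fin (Module.finrank R X) → ResidueField R) :=
    (LinearEquiv.rTensor _ (Module.finBasis R X).equivFun).trans
      ((TensorProduct.comm R _ _).trans (TensorProduct.piScalarRight R R _ _))
  refine e.length_eq.trans ?_
  have : IsSimpleModule R (ResidueField R) :=
    (isSimpleModule_iff_quot_maximal).mpr ⟨maximalIdeal R, inferInstance, ⟨.refl R _⟩⟩
  simp [Module.length_pi_of_fintype]

lemma torLength_zero_le_quotient {X : Type u} [AddCommGroup X] [Module R X] (P : Submodule R X)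
    (hP : P ≤ maximalIdeal R • (⊤ : Submodule R X)) :
    torLength (resField R) 0 (.of R X) ≤ torLength (resField R) 0 (.of R (X ⧸ P)) := by
  rw [torLength_zero, torLength_zero]
  have hz : P.subtype.rTensor (ResidueField R) = 0 := by
    ext p r
    obtain ⟨p, hp⟩ := p
    simp only [AlgebraTensorModule.curry_apply, curry_apply, LinearMap.coe_restrictScalars,
      LinearMap.rTensor_tmul, Submodule.subtype_apply, LinearMap.zero_apply]
    refine Submodule.smul_induction_on (hP hp) (fun a ha x _ ↦ ?_) fun x y hx hy ↦ ?_
    · rw [smul_tmul, Algebra.smul_def, ResidueField.algebraMap_eq, (residue_eq_zero_iff a).mpr ha]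
      simp
    · rw [add_tmul, hx, hy, add_zero]
  refine Module.length_le_of_injective (P.mkQ.rTensor (ResidueField R)) ?_
  rw [← LinearMap.ker_eq_bot, LinearMap.exact_iff.mp (rTensor_exact (ResidueField R)
    (LinearMap.exact_subtype_mkQ P) P.mkQ_surjective), hz, LinearMap.range_zero]

lemma exists_minimal_cover (M : Type u) [AddCommGroup M] [Module R M] [Module.Finite R M] :
    ∃ (b : ℕ) (f : (Fin b → R) →ₗ[R] M), Function.Surjective f ∧
      LinearMap.ker f ≤ maximalIdeal R • ⊤ := by
  let B := Module.finBasis (ResidueField R) (ResidueField R ⊗[R] M)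
  have hex (i) : ∃ x : M, 1 ⊗ₜ[R] x = B i :=
    TensorProduct.mk_surjective R M (ResidueField R) residue_surjective (B i)
  choose x hx using hex
  refine ⟨_, Fintype.linearCombination R x, ?_, fun a ha ↦ ?_⟩
  · rw [← LinearMap.range_eq_top, Fintype.range_linearCombination]
    exact IsLocalRing.span_eq_top_of_tmul_eq_basis x B hx
  · have h : ∑ i, residue R (a i) • B i = 0 := by
      have h0 : (1 : ResidueField R) ⊗ₜ[R] (Fintype.linearCombination R x a) = 0 := by
        rw [LinearMap.mem_ker.mp ha, tmul_zero]
      rw [Fintype.linearCombination_apply, tmul_sum] at h0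
      rw [← h0]
      refine Finset.sum_congr rfl fun i _ ↦ ?_
      rw [← hx, tmul_smul, ← ResidueField.algebraMap_eq, algebraMap_smul]
    have hz := Fintype.linearIndependent_iff.mp B.linearIndependent _ h
    rw [pi_eq_sum_univ' a]
    exact Submodule.sum_mem _ fun i _ ↦
      Submodule.smul_mem_smul ((residue_eq_zero_iff _).mp (hz i)) trivial

variable (R) in
/-- A free resolution of `M` by finite free modules whose differentials have entries in the
maximal ideal. -/
structure MinimalFreeResolution (M : Type u) [AddCommGroup M] [Module R M] where
  rank : ℕ → ℕ
  d (n : ℕ) : (Fin (rank (n + 1)) → R) →ₗ[R] (Fin (rank n) → R)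
  ε : (Fin (rank 0) → R) →ₗ[R] M
  surjective_ε : Function.Surjective ε
  exact_zero : Function.Exact (d 0) ε
  exact_succ (n : ℕ) : Function.Exact (d (n + 1)) (d n)
  range_d_le (n : ℕ) : LinearMap.range (d n) ≤ maximalIdeal R • ⊤
  torLength_le_rank (n : ℕ) : torLength (resField R) n (.of R M) ≤ rank n

variable [IsNoetherianRing R]

lemma nonempty_minimalFreeResolution (M : Type u) [AddCommGroup M] [Module R M]
    [Module.Finite R M] : Nonempty (MinimalFreeResolution R M) := by
  choose b f hf hker using fun X : {X : ModuleCat.{u} R // Module.Finite R X} ↦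
    have := X.2
    exists_minimal_cover (R := R) X.1
  let syz (n : ℕ) : {X : ModuleCat.{u} R // Module.Finite R X} :=
    n.rec ⟨.of R M, ‹_›⟩ fun _ X ↦ ⟨.of R (LinearMap.ker (f X)), inferInstance⟩
  let π (n : ℕ) : (Fin (b (syz (n + 1))) → R) →ₗ[R] LinearMap.ker (f (syz n)) := f (syz (n + 1))
  have hπ (n : ℕ) : Function.Surjective (π n) := hf (syz (n + 1))
  have hkerπ (n : ℕ) : LinearMap.ker (f (syz (n + 1))) = LinearMap.ker (π n) := rfl
  let d (n : ℕ) : (Fin (b (syz (n + 1))) → R) →ₗ[R] (Fin (b (syz n)) → R) :=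
    (LinearMap.ker (f (syz n))).subtype ∘ₗ π n
  have hrange (n : ℕ) : LinearMap.range (d n) = LinearMap.ker (f (syz n)) := by
    rw [LinearMap.range_comp, LinearMap.range_eq_top.mpr (hπ n), Submodule.map_subtype_top]
  have hkerd (n : ℕ) : LinearMap.ker (d n) = LinearMap.ker (f (syz (n + 1))) := by
    rw [LinearMap.ker_comp, Submodule.ker_subtype, Submodule.comap_bot, hkerπ]
  have hbound (n j : ℕ) : torLength (resField R) (n + j) (.of R M) ≤
      torLength (resField R) j (syz n).1 := by
    induction n generalizing j with
    | zero => simp [syz]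
    | succ n ih =>
      rw [show n + 1 + j = n + (j + 1) by omega]
      exact (ih (j + 1)).trans (torLength_le_ker _ (f (syz n)) (hf (syz n)) j)
  refine ⟨⟨fun n ↦ b (syz n), d, f (syz 0), hf (syz 0), LinearMap.exact_iff.mpr (hrange 0).symm,
    fun n ↦ LinearMap.exact_iff.mpr ((hkerd n).trans (hrange (n + 1)).symm),
    fun n ↦ (hrange n).trans_le (hker (syz n)), fun n ↦ (hbound n 0).trans ?_⟩⟩
  have h := torLength_resField_zero_free (R := R) (Fin (b (syz n)) → R)
  rw [Module.finrank_fin_fun] at h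
  rw [← h, torLength_zero, torLength_zero]
  exact Module.length_le_of_surjective _
    (LinearMap.rTensor_surjective (ResidueField R) (hf (syz n)))

end Local

section Homology
variable {R : Type u} [CommRing R]

/-- Homology as the kernel of the map induced on `X₂ / im f`. -/
lemma nonempty_homology_equiv_ker (S : ShortComplex (ModuleCat.{u} R))
    (h : LinearMap.range S.f.hom ≤ LinearMap.ker S.g.hom) :
    Nonempty (LinearMap.ker ((LinearMap.range S.f.hom).liftQ S.g.hom h) ≃ₗ[R] S.homology) := by
  let φ : S.homology →ₗ[R] S.X₂ ⧸ LinearMap.range S.f.hom :=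
    (S.homologyι ≫ S.moduleCatOpcyclesIso.hom).hom
  have hφ : Function.Injective φ := (ModuleCat.mono_iff_injective _).mp inferInstance
  have hex := ShortComplex.exact_of_f_is_kernel (ShortComplex.mk S.homologyι S.fromOpcycles
    S.homologyι_comp_fromOpcycles) S.homologyIsKernel
  have hcomp : S.moduleCatOpcyclesIso.hom ≫
      ModuleCat.ofHom ((LinearMap.range S.f.hom).liftQ S.g.hom h) = S.fromOpcycles := by
    rw [← cancel_epi S.pOpcycles, S.p_fromOpcycles, ← Category.assoc,
      S.pOpcycles_comp_moduleCatOpcyclesIso_hom]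
    ext x
    rfl
  rw [ShortComplex.ShortExact.moduleCat_exact_iff_function_exact] at hex
  have hcomp' (x : S.opcycles) : (LinearMap.range S.f.hom).liftQ S.g.hom h
      (S.moduleCatOpcyclesIso.hom x) = S.fromOpcycles x := by
    rw [← hcomp]; rfl
  have hrange : LinearMap.range φ =
      LinearMap.ker ((LinearMap.range S.f.hom).liftQ S.g.hom h) := by
    ext w
    obtain ⟨x, rfl⟩ := S.moduleCatOpcyclesIso.toLinearEquiv.surjective w
    refine Iff.trans ?_ ((hex x).symm.trans (Eq.congr_left (hcomp' x).symm))
    exact exists_congr fun y ↦ S.moduleCatOpcyclesIso.toLinearEquiv.injective.eq_iff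
  exact ⟨(LinearEquiv.ofEq _ _ hrange.symm).trans (LinearEquiv.ofInjective φ hφ).symm⟩

end Homology

section Comparison
variable {R : Type u} [CommRing R] {C D : ℕ → Type u} [∀ n, AddCommGroup (C n)]
  [∀ n, Module R (C n)] [∀ n, AddCommGroup (D n)] [∀ n, Module R (D n)]
  {d : ∀ n, C (n + 1) →ₗ[R] C n} {d' : ∀ n, D (n + 1) →ₗ[R] D n}

lemma nonempty_quotient_equiv {ε : ∀ n, C n →ₗ[R] D n} (hε : ∀ n, Function.Surjective (ε n))
    (hcomm : ∀ n x, ε n (d n x) = d' n (ε (n + 1) x))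
    (h₀ : ∀ x : C 0, ε 0 x = 0 → ∃ y, ε 1 y = 0 ∧ d 0 y = x) :
    Nonempty ((C 0 ⧸ LinearMap.range (d 0)) ≃ₗ[R] D 0 ⧸ LinearMap.range (d' 0)) := by
  refine ⟨LinearEquiv.ofBijective (Submodule.mapQ _ _ (ε 0) ?_) ⟨?_, ?_⟩⟩
  · rintro _ ⟨x, rfl⟩
    exact ⟨ε 1 x, (hcomm 0 x).symm⟩
  · rw [injective_iff_map_eq_zero]
    intro a
    obtain ⟨x, rfl⟩ := Submodule.mkQ_surjective _ a
    intro hx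
    simp only [Submodule.mkQ_apply, Submodule.mapQ_apply, Submodule.Quotient.mk_eq_zero] at hx ⊢
    obtain ⟨w, hw⟩ := hx
    obtain ⟨v, rfl⟩ := hε 1 w
    obtain ⟨y, -, hy⟩ := h₀ (x - d 0 v) (by rw [map_sub, hcomm, hw, sub_self])
    exact ⟨y + v, by rw [map_add, hy, sub_add_cancel]⟩
  · intro a
    obtain ⟨x, rfl⟩ := Submodule.mkQ_surjective _ a
    obtain ⟨x, rfl⟩ := hε 0 x
    exact ⟨Submodule.mkQ _ x, rfl⟩

lemma nonempty_ker_equiv {ε : ∀ n, C n →ₗ[R] D n} (hε : ∀ n, Function.Surjective (ε n))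
    (hcomm : ∀ n x, ε n (d n x) = d' n (ε (n + 1) x))
    (hd : ∀ n, LinearMap.range (d (n + 1)) ≤ LinearMap.ker (d n))
    (hd' : ∀ n, LinearMap.range (d' (n + 1)) ≤ LinearMap.ker (d' n))
    (h₀ : ∀ x : C 0, ε 0 x = 0 → ∃ y, ε 1 y = 0 ∧ d 0 y = x)
    (h₁ : ∀ n (x : C (n + 1)), ε (n + 1) x = 0 → d n x = 0 →
      ∃ y, ε (n + 2) y = 0 ∧ d (n + 1) y = x) (n : ℕ) :
    Nonempty (LinearMap.ker ((LinearMap.range (d (n + 1))).liftQ (d n) (hd n)) ≃ₗ[R]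
      LinearMap.ker ((LinearMap.range (d' (n + 1))).liftQ (d' n) (hd' n))) := by
  have hlift (z : C (n + 1)) (hz : ε n (d n z) = 0) : ∃ y, ε (n + 1) y = 0 ∧ d n y = d n z := by
    cases n with
    | zero => exact h₀ _ hz
    | succ n => exact h₁ n _ hz (hd n ⟨z, rfl⟩)
  let φ := Submodule.mapQ (LinearMap.range (d (n + 1))) (LinearMap.range (d' (n + 1))) (ε (n + 1))
    (by
      rintro _ ⟨x, rfl⟩
      exact ⟨ε (n + 2) x, (hcomm (n + 1) x).symm⟩)
  have hφ : ∀ a ∈ LinearMap.ker ((LinearMap.range (d (n + 1))).liftQ (d n) (hd n)),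
      φ a ∈ LinearMap.ker ((LinearMap.range (d' (n + 1))).liftQ (d' n) (hd' n)) := by
    intro a
    obtain ⟨x, rfl⟩ := Submodule.mkQ_surjective _ a
    intro hx
    change d n x = 0 at hx
    change d' n (ε (n + 1) x) = 0
    rw [← hcomm, hx, map_zero]
  refine ⟨LinearEquiv.ofBijective (φ.restrict hφ) ⟨?_, ?_⟩⟩
  · rw [injective_iff_map_eq_zero]
    rintro ⟨a, ha⟩ h
    obtain ⟨x, rfl⟩ := Submodule.mkQ_surjective _ a
    change d n x = 0 at ha
    have hx : φ (Submodule.mkQ _ x) = 0 := congrArg Subtype.val h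
    apply Subtype.ext
    change Submodule.mkQ _ x = 0
    simp only [φ, Submodule.mkQ_apply, Submodule.mapQ_apply, Submodule.Quotient.mk_eq_zero] at hx ⊢
    obtain ⟨w, hw⟩ := hx
    obtain ⟨v, rfl⟩ := hε (n + 2) w
    obtain ⟨y, -, hy⟩ := h₁ n (x - d (n + 1) v) (by rw [map_sub, hcomm, hw, sub_self])
      (by rw [map_sub, ha, LinearMap.mem_ker.mp (hd n ⟨v, rfl⟩), sub_zero])
    exact ⟨y + v, by rw [map_add, hy, sub_add_cancel]⟩
  · rintro ⟨a, ha⟩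
    obtain ⟨z, rfl⟩ := Submodule.mkQ_surjective _ a
    obtain ⟨x, rfl⟩ := hε (n + 1) z
    change d' n (ε (n + 1) x) = 0 at ha
    obtain ⟨y, hy₀, hy⟩ := hlift x (by rw [hcomm, ha])
    refine ⟨⟨Submodule.mkQ _ (x - y), ?_⟩, Subtype.ext ?_⟩
    · change d n (x - y) = 0
      rw [map_sub, hy, sub_self]
    · change Submodule.mkQ _ (ε (n + 1) (x - y)) = _
      rw [map_sub, hy₀, sub_zero]

end Comparison

section Total
variable {R : Type u} [CommRing R] {A : ℕ → ℕ → Type u} [∀ p q, AddCommGroup (A p q)]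
  [∀ p q, Module R (A p q)]

variable (A) in
/-- The degree `n` part of the total complex of a first-quadrant double complex. -/
abbrev TotalDegree (n : ℕ) : Type u := ∀ s : antidiagonal n, A s.1.1 s.1.2

/-- The differential of the total complex. -/
def totalD (dh : ∀ p q, A (p + 1) q →ₗ[R] A p q) (dv : ∀ p q, A p (q + 1) →ₗ[R] A p q) (n : ℕ) :
    TotalDegree A (n + 1) →ₗ[R] TotalDegree A n :=
  LinearMap.pi fun s ↦
    dh s.1.1 s.1.2 ∘ₗ LinearMap.proj (φ := fun t : antidiagonal (n + 1) ↦ A t.1.1 t.1.2)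
      ⟨(s.1.1 + 1, s.1.2), by have := mem_antidiagonal.mp s.2; simp; omega⟩ +
    (-1 : R) ^ s.1.1 • dv s.1.1 s.1.2 ∘ₗ
      LinearMap.proj (φ := fun t : antidiagonal (n + 1) ↦ A t.1.1 t.1.2)
        ⟨(s.1.1, s.1.2 + 1), by have := mem_antidiagonal.mp s.2; simp; omega⟩

variable {dh : ∀ p q, A (p + 1) q →ₗ[R] A p q} {dv : ∀ p q, A p (q + 1) →ₗ[R] A p q}

lemma totalD_apply {n : ℕ} (x : TotalDegree A (n + 1)) (p q : ℕ) (h : (p, q) ∈ antidiagonal n)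
    (h₁ : (p + 1, q) ∈ antidiagonal (n + 1))
    (h₂ : (p, q + 1) ∈ antidiagonal (n + 1)) :
    totalD dh dv n x ⟨(p, q), h⟩ =
      dh p q (x ⟨(p + 1, q), h₁⟩) + (-1 : R) ^ p • dv p q (x ⟨(p, q + 1), h₂⟩) := rfl

lemma range_totalD_le_ker (hcomm : ∀ p q x, dh p q (dv (p + 1) q x) = dv p q (dh p (q + 1) x))
    (hh : ∀ p q x, dh p q (dh (p + 1) q x) = 0) (hv : ∀ p q x, dv p q (dv p (q + 1) x) = 0)
    (n : ℕ) : LinearMap.range (totalD dh dv (n + 1)) ≤ LinearMap.ker (totalD dh dv n) := by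
  rintro _ ⟨x, rfl⟩
  rw [LinearMap.mem_ker]
  ext ⟨⟨p, q⟩, h⟩
  have hpq := mem_antidiagonal.mp h
  simp only at hpq
  rw [totalD_apply _ p q h (by simp; omega) (by simp; omega),
    totalD_apply _ (p + 1) q _ (by simp; omega) (by simp; omega),
    totalD_apply _ p (q + 1) _ (by simp; omega) (by simp; omega)]
  simp only [map_add, map_smul, hh, hv, hcomm, smul_zero, add_zero, zero_add, Pi.zero_apply]
  rw [pow_succ, mul_neg_one, neg_smul, neg_add_cancel]

variable {D : ℕ → Type u} [∀ q, AddCommGroup (D q)] [∀ q, Module R (D q)]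
  {ε : ∀ q, A 0 q →ₗ[R] D q}

/-- A double complex whose rows are exact, augmentation included, has an acyclic augmented total
complex. -/
lemma exists_total_primitive
    (hcomm : ∀ p q x, dh p q (dv (p + 1) q x) = dv p q (dh p (q + 1) x))
    (hv : ∀ p q x, dv p q (dv p (q + 1) x) = 0)
    (h₀ : ∀ q, Function.Exact (dh 0 q) (ε q))
    (h₁ : ∀ p q, Function.Exact (dh (p + 1) q) (dh p q)) (x : ∀ p q, A p q)
    (hx : ∀ p q, dh p q (x (p + 1) q) + (-1 : R) ^ p • dv p q (x p (q + 1)) = 0)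
    (hx₀ : ∀ q, ε q (x 0 q) = 0) :
    ∃ y : ∀ p q, A p q, (∀ q, y 0 q = 0) ∧
      ∀ p q, dh p q (y (p + 1) q) + (-1 : R) ^ p • dv p q (y p (q + 1)) = x p q := by
  let Row (p : ℕ) := {y : ∀ q, A p q //
    ∀ q, ∃ z, dh p q z = x p q - (-1 : R) ^ p • dv p q (y (q + 1))}
  have step (p : ℕ) (y : Row p) : ∃ z : Row (p + 1),
      ∀ q, dh p q (z.1 q) = x p q - (-1 : R) ^ p • dv p q (y.1 (q + 1)) := by
    choose z hz using y.2
    refine ⟨⟨z, fun q ↦ (h₁ p q _).mp ?_⟩, hz⟩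
    rw [map_sub, map_smul, hcomm, hz, map_sub, map_smul, hv, smul_zero, sub_zero, ← hx p q,
      pow_succ, mul_neg_one, neg_smul, sub_neg_eq_add]
  choose next hnext using step
  let y (p : ℕ) : Row p := p.rec ⟨0, fun q ↦ by
    refine (h₀ q _).mp ?_
    simp [hx₀]⟩ next
  refine ⟨fun p ↦ (y p).1, fun q ↦ rfl, fun p q ↦ ?_⟩
  rw [show dh p q ((y (p + 1)).1 q) = _ from hnext p (y p) q, sub_add_cancel]

variable (A ε) in
/-- The augmentation of the total complex. -/
def totalAug (n : ℕ) : TotalDegree A n →ₗ[R] D n :=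
  ε n ∘ₗ LinearMap.proj (φ := fun t : antidiagonal n ↦ A t.1.1 t.1.2) ⟨(0, n), by simp⟩

lemma totalAug_apply {n : ℕ} (x : TotalDegree A n) :
    totalAug A ε n x = ε n (x ⟨(0, n), by simp⟩) := rfl

lemma totalAug_surjective (hε : ∀ q, Function.Surjective (ε q)) (n : ℕ) :
    Function.Surjective (totalAug A ε n) :=
  (hε n).comp (LinearMap.proj_surjective _)

lemma totalAug_totalD {d : ∀ q, D (q + 1) →ₗ[R] D q}
    (hε : ∀ q x, ε q (dv 0 q x) = d q (ε (q + 1) x))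
    (h₀ : ∀ q, Function.Exact (dh 0 q) (ε q)) (n : ℕ) (x : TotalDegree A (n + 1)) :
    totalAug A ε n (totalD dh dv n x) = d n (totalAug A ε (n + 1) x) := by
  rw [totalAug_apply, totalD_apply _ 0 n _ (by simp [add_comm]) (by simp), map_add,
    (h₀ n).apply_apply_eq_zero, zero_add, pow_zero, one_smul, hε]
  rfl

lemma exists_total_primitive_of_degree
    (hcomm : ∀ p q x, dh p q (dv (p + 1) q x) = dv p q (dh p (q + 1) x))
    (hv : ∀ p q x, dv p q (dv p (q + 1) x) = 0)
    (h₀ : ∀ q, Function.Exact (dh 0 q) (ε q))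
    (h₁ : ∀ p q, Function.Exact (dh (p + 1) q) (dh p q)) {n : ℕ} (x : TotalDegree A n)
    (hx₀ : totalAug A ε n x = 0)
    (hx : ∀ p q (h₁ : (p + 1, q) ∈ antidiagonal n)
      (h₂ : (p, q + 1) ∈ antidiagonal n),
      dh p q (x ⟨(p + 1, q), h₁⟩) + (-1 : R) ^ p • dv p q (x ⟨(p, q + 1), h₂⟩) = 0) :
    ∃ y : TotalDegree A (n + 1), totalAug A ε (n + 1) y = 0 ∧ totalD dh dv n y = x := by
  let x' (p q : ℕ) : A p q := if h : (p, q) ∈ antidiagonal n then x ⟨(p, q), h⟩ else 0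
  obtain ⟨y, hy₀, hy⟩ := exists_total_primitive hcomm hv h₀ h₁ x' (fun p q ↦ by
    by_cases h : p + 1 + q = n
    · have h' : p + (q + 1) = n := by omega
      simpa [x', h, h'] using hx p q (by simpa) (by simpa)
    · have h' : p + (q + 1) ≠ n := by omega
      simp [x', h, h']) (fun q ↦ by
    by_cases h : q = n
    · subst h
      simpa [x', totalAug_apply] using hx₀
    · simp [x', h])
  refine ⟨fun s ↦ y s.1.1 s.1.2, by rw [totalAug_apply, hy₀, map_zero], ?_⟩
  ext ⟨⟨p, q⟩, h⟩
  have hpq := mem_antidiagonal.mp h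
  simp only at hpq
  rw [totalD_apply _ p q h (by simp; omega) (by simp; omega), hy]
  simp [x', hpq]

end Total

namespace MinimalFreeResolution
variable {R : Type u} [CommRing R] [IsLocalRing R] {N : Type u} [AddCommGroup N] [Module R N]
  (G : MinimalFreeResolution R N)

/-- The chain complex underlying a minimal free resolution. -/
noncomputable def complex : ChainComplex (ModuleCat.{u} R) ℕ :=
  ChainComplex.of (fun n ↦ .of R (Fin (G.rank n) → R)) (fun n ↦ ModuleCat.ofHom (G.d n))
    fun n ↦ ModuleCat.hom_ext (G.exact_succ n).linearMap_comp_eq_zero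

lemma complex_d (n : ℕ) : G.complex.d (n + 1) n = ModuleCat.ofHom (G.d n) :=
  ChainComplex.of_d (fun n ↦ ModuleCat.of R (Fin (G.rank n) → R))
    (fun n ↦ ModuleCat.ofHom (G.d n)) n

/-- A minimal free resolution, as a projective resolution. -/
noncomputable def projectiveResolution : ProjectiveResolution (ModuleCat.of R N) where
  complex := G.complex
  projective n := (IsProjective.iff_projective (R := R) (Fin (G.rank n) → R)).mp inferInstance
  π := (ChainComplex.toSingle₀Equiv _ _).symm ⟨ModuleCat.ofHom G.ε, by
    rw [G.complex_d 0]
    exact ModuleCat.hom_ext G.exact_zero.linearMap_comp_eq_zero⟩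
  quasiIso := ⟨fun n => by
    cases n with
    | zero =>
      rw [ChainComplex.quasiIsoAt₀_iff, ShortComplex.quasiIso_iff_of_zeros']
      · let S := ShortComplex.moduleCatMk (G.d 0) G.ε G.exact_zero.linearMap_comp_eq_zero
        have hS : S.Exact ∧ Epi S.g :=
          ⟨(ShortComplex.ShortExact.moduleCat_exact_iff_function_exact _).mpr G.exact_zero,
            (ModuleCat.epi_iff_surjective _).mpr G.surjective_ε⟩
        refine (ShortComplex.exact_and_epi_g_iff_of_iso ?_).2 hS
        exact ShortComplex.isoMk (Iso.refl _) (Iso.refl _) (Iso.refl _)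
          (by
            change 𝟙 _ ≫ S.f = G.complex.d 1 0 ≫ 𝟙 _
            rw [Category.id_comp, Category.comp_id, G.complex_d]
            rfl)
          (by simp; rfl)
      all_goals rfl
    | succ n =>
      rw [quasiIsoAt_iff_exactAt']
      · rw [HomologicalComplex.exactAt_iff' _ (n + 2) (n + 1) n (by simp) (by simp),
          ShortComplex.ShortExact.moduleCat_exact_iff_function_exact]
        change Function.Exact (G.complex.d (n + 2) (n + 1)) (G.complex.d (n + 1) n)
        rw [G.complex_d, G.complex_d]
        exact G.exact_succ n
      · apply ChainComplex.exactAt_succ_single_obj⟩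

variable (M : ModuleCat.{u} R)

lemma range_lTensor_d_le_ker (n : ℕ) :
    LinearMap.range ((G.d (n + 1)).lTensor M) ≤ LinearMap.ker ((G.d n).lTensor M) := by
  rw [LinearMap.range_le_ker_iff, ← LinearMap.lTensor_comp,
    (G.exact_succ n).linearMap_comp_eq_zero, LinearMap.lTensor_zero]

lemma nonempty_ker_equiv_tor (n : ℕ) :
    Nonempty (LinearMap.ker ((LinearMap.range ((G.d (n + 1)).lTensor M)).liftQ
      ((G.d n).lTensor M) (G.range_lTensor_d_le_ker M n)) ≃ₗ[R]
      ((Tor (ModuleCat.{u} R) (n + 1)).obj M).obj (.of R N)) := by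
  let S := ShortComplex.moduleCatMk ((G.d (n + 1)).lTensor M) ((G.d n).lTensor M)
    (LinearMap.range_le_ker_iff.mp (G.range_lTensor_d_le_ker M n))
  obtain ⟨e⟩ := nonempty_homology_equiv_ker S (G.range_lTensor_d_le_ker M n)
  have iso : S ≅ (tensorComplex G.complex M).sc' (n + 2) (n + 1) n :=
    ShortComplex.isoMk (Iso.refl _) (Iso.refl _) (Iso.refl _)
      (by
        change 𝟙 _ ≫ (M ◁ G.complex.d (n + 2) (n + 1)) = S.f ≫ 𝟙 _
        rw [G.complex_d, Category.id_comp, Category.comp_id]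
        rfl)
      (by
        change 𝟙 _ ≫ (M ◁ G.complex.d (n + 1) n) = S.g ≫ 𝟙 _
        rw [G.complex_d, Category.id_comp, Category.comp_id]
        rfl)
  let e' : S.homology ≅ ((Tor (ModuleCat.{u} R) (n + 1)).obj M).obj (.of R N) :=
    ShortComplex.homologyMapIso iso ≪≫
      ((tensorComplex G.complex M).homologyIsoSc' (n + 2) (n + 1) n (by simp) (by simp)).symm ≪≫
      (G.projectiveResolution.isoLeftDerivedObj
        ((tensoringLeft (ModuleCat.{u} R)).obj M) (n + 1)).symm
  exact ⟨e.trans e'.toLinearEquiv⟩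

lemma nonempty_quotient_equiv_tor_zero :
    Nonempty ((M ⊗[R] (Fin (G.rank 0) → R) ⧸ LinearMap.range ((G.d 0).lTensor M)) ≃ₗ[R]
      ((Tor (ModuleCat.{u} R) 0).obj M).obj (.of R N)) := by
  have : PreservesFiniteColimits ((tensoringLeft (ModuleCat.{u} R)).obj M) :=
    inferInstanceAs (PreservesFiniteColimits (tensorLeft M))
  let e : ((Tor (ModuleCat.{u} R) 0).obj M).obj (.of R N) ≅ ModuleCat.of R (M ⊗[R] N) :=
    (((tensoringLeft (ModuleCat.{u} R)).obj M).leftDerivedZeroIsoSelf).app (.of R N)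
  have hex := _root_.lTensor_exact M G.exact_zero G.surjective_ε
  have hsurj := LinearMap.lTensor_surjective M G.surjective_ε
  exact ⟨(Submodule.quotEquivOfEq _ _ (LinearMap.exact_iff.mp hex).symm).trans
    (((G.ε.lTensor M).quotKerEquivOfSurjective hsurj).trans e.symm.toLinearEquiv)⟩

end MinimalFreeResolution

section
variable {R : Type u} [CommRing R]

lemma range_rTensor_le_smul_top (I : Ideal R) {X Y Z : Type*} [AddCommGroup X] [AddCommGroup Y]
    [AddCommGroup Z] [Module R X] [Module R Y] [Module R Z] {f : X →ₗ[R] Y}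
    (hf : LinearMap.range f ≤ I • ⊤) : LinearMap.range (f.rTensor Z) ≤ I • ⊤ := by
  rintro _ ⟨t, rfl⟩
  induction t with
  | zero => simp
  | add s t hs ht => rw [map_add]; exact add_mem hs ht
  | tmul x z =>
    rw [LinearMap.rTensor_tmul]
    have h : ((TensorProduct.mk R Y Z).flip z) (f x) ∈
        (I • (⊤ : Submodule R Y)).map ((TensorProduct.mk R Y Z).flip z) :=
      Submodule.mem_map_of_mem (hf ⟨x, rfl⟩)
    rw [Submodule.map_smul''] at h
    exact Submodule.smul_mono le_rfl le_top h

lemma range_lTensor_le_smul_top (I : Ideal R) {X Y Z : Type*} [AddCommGroup X] [AddCommGroup Y]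
    [AddCommGroup Z] [Module R X] [Module R Y] [Module R Z] {f : X →ₗ[R] Y}
    (hf : LinearMap.range f ≤ I • ⊤) : LinearMap.range (f.lTensor Z) ≤ I • ⊤ := by
  rintro _ ⟨t, rfl⟩
  induction t with
  | zero => simp
  | add s t hs ht => rw [map_add]; exact add_mem hs ht
  | tmul z x =>
    rw [LinearMap.lTensor_tmul]
    have h : (TensorProduct.mk R Z Y z) (f x) ∈
        (I • (⊤ : Submodule R Y)).map (TensorProduct.mk R Z Y z) :=
      Submodule.mem_map_of_mem (hf ⟨x, rfl⟩)
    rw [Submodule.map_smul''] at h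
    exact Submodule.smul_mono le_rfl le_top h

lemma mem_smul_top_of_forall_apply (I : Ideal R) {ι : Type*} [Fintype ι] {X : ι → Type*}
    [∀ i, AddCommGroup (X i)] [∀ i, Module R (X i)] (x : ∀ i, X i)
    (hx : ∀ i, x i ∈ I • (⊤ : Submodule R (X i))) : x ∈ I • (⊤ : Submodule R (∀ i, X i)) := by
  classical
  rw [← Finset.univ_sum_single x]
  refine Submodule.sum_mem _ fun i _ ↦ ?_
  have h := Submodule.mem_map_of_mem (f := LinearMap.single R X i) (hx i)
  rw [Submodule.map_smul''] at h
  exact Submodule.smul_mono le_rfl le_top h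

lemma range_totalD_le_smul_top (I : Ideal R) {A : ℕ → ℕ → Type u} [∀ p q, AddCommGroup (A p q)]
    [∀ p q, Module R (A p q)] {dh : ∀ p q, A (p + 1) q →ₗ[R] A p q}
    {dv : ∀ p q, A p (q + 1) →ₗ[R] A p q} (hh : ∀ p q, LinearMap.range (dh p q) ≤ I • ⊤)
    (hv : ∀ p q, LinearMap.range (dv p q) ≤ I • ⊤) (n : ℕ) :
    LinearMap.range (totalD dh dv n) ≤ I • ⊤ := by
  rintro _ ⟨x, rfl⟩
  refine mem_smul_top_of_forall_apply I _ fun s ↦ ?_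
  exact add_mem (hh _ _ ⟨_, rfl⟩) (Submodule.smul_mem _ _ (hv _ _ ⟨_, rfl⟩))

end

section

variable {R : Type u} [CommRing R] [IsLocalRing R]

/-- The tensor product of minimal free resolutions of `M` and `N` is a minimal complex with
homology `Tor(M, N)`, which bounds the ranks of its terms. -/
lemma sum_rank_mul_rank_le {M N : Type u} [AddCommGroup M] [Module R M] [AddCommGroup N]
    [Module R N] (F : MinimalFreeResolution R M) (G : MinimalFreeResolution R N) (n : ℕ) :
    ∑ s ∈ antidiagonal n, (F.rank s.1 : ℕ∞) * G.rank s.2 ≤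
      ∑ i ∈ Finset.range (n + 1), torLength (resField R) (n - i)
        (((Tor (ModuleCat.{u} R) i).obj (.of R M)).obj (.of R N)) := by
  let A (p q : ℕ) : Type u := (Fin (F.rank p) → R) ⊗[R] (Fin (G.rank q) → R)
  let dh (p q : ℕ) : A (p + 1) q →ₗ[R] A p q := (F.d p).rTensor _
  let dv (p q : ℕ) : A p (q + 1) →ₗ[R] A p q := (G.d q).lTensor _
  let ε (q : ℕ) : A 0 q →ₗ[R] M ⊗[R] (Fin (G.rank q) → R) := F.ε.rTensor _
  let d' (q : ℕ) : M ⊗[R] (Fin (G.rank (q + 1)) → R) →ₗ[R] M ⊗[R] (Fin (G.rank q) → R) :=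
    (G.d q).lTensor M
  have hcomm (p q x) : dh p q (dv (p + 1) q x) = dv p q (dh p (q + 1) x) :=
    LinearMap.congr_fun ((LinearMap.rTensor_comp_lTensor ..).trans
      (LinearMap.lTensor_comp_rTensor ..).symm) x
  have hεd (q x) : ε q (dv 0 q x) = d' q (ε (q + 1) x) :=
    LinearMap.congr_fun ((LinearMap.rTensor_comp_lTensor ..).trans
      (LinearMap.lTensor_comp_rTensor ..).symm) x
  have h₀ (q) : Function.Exact (dh 0 q) (ε q) := Module.Flat.rTensor_exact _ F.exact_zero
  have h₁ (p q) : Function.Exact (dh (p + 1) q) (dh p q) :=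
    Module.Flat.rTensor_exact _ (F.exact_succ p)
  have hh (p q x) : dh p q (dh (p + 1) q x) = 0 := (h₁ p q).apply_apply_eq_zero x
  have hv (p q x) : dv p q (dv p (q + 1) x) = 0 :=
    (Module.Flat.lTensor_exact (Fin (F.rank p) → R) (G.exact_succ q)).apply_apply_eq_zero x
  have hε (q) : Function.Surjective (ε q) := LinearMap.rTensor_surjective _ F.surjective_ε
  have hd := range_totalD_le_ker hcomm hh hv
  have haug := totalAug_surjective (A := A) hε
  have haugd := totalAug_totalD hεd h₀
  have hac₀ (x : TotalDegree A 0) (hx : totalAug A ε 0 x = 0) :=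
    exists_total_primitive_of_degree hcomm hv h₀ h₁ x hx (by simp)
  have hac₁ (n) (x : TotalDegree A (n + 1)) (hx : totalAug A ε (n + 1) x = 0)
      (hx' : totalD dh dv n x = 0) :=
    exists_total_primitive_of_degree hcomm hv h₀ h₁ x hx fun p q hp hq ↦
      congrFun hx' ⟨(p, q), by simp at hp ⊢; omega⟩
  have hrank (n) : torLength (resField R) 0 (.of R (TotalDegree A n)) =
      ∑ s ∈ antidiagonal n, (F.rank s.1 : ℕ∞) * G.rank s.2 := by
    rw [torLength_resField_zero_free, Module.finrank_pi_fintype]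
    simp only [A, Module.finrank_tensorProduct, Module.finrank_fin_fun]
    rw [Finset.sum_coe_sort (antidiagonal n)
      (fun s ↦ F.rank s.1 * G.rank s.2)]
    push_cast
    rfl
  have hfree (p q) : Module.Free R (A p q) := inferInstanceAs (Module.Free R (_ ⊗[R] _))
  have hfree' (n) : Module.Free R (TotalDegree A n) := Module.Free.pi R _
  have hflat (n) : Module.Flat R (TotalDegree A n) := Module.Flat.of_free
  have hle (n) := torLength_zero_le_quotient _ (range_totalD_le_smul_top (maximalIdeal R)
    (dh := dh) (dv := dv) (fun p q ↦ range_rTensor_le_smul_top _ (F.range_d_le p))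
    (fun p q ↦ range_lTensor_le_smul_top _ (G.range_d_le q)) n)
  rw [← hrank]
  refine (hle n).trans ?_
  have := torLength_opcycles_le (resField R) (totalD dh dv) hd
    (fun n ↦ by rw [torLength_resField_zero_free]; exact ENat.natCast_ne_top _) hle
    (fun i ↦ ((Tor (ModuleCat.{u} R) i).obj (.of R M)).obj (.of R N))
    (by
      obtain ⟨e₁⟩ := nonempty_quotient_equiv haug haugd hac₀
      obtain ⟨e₂⟩ := G.nonempty_quotient_equiv_tor_zero (.of R M)
      exact ⟨e₁.trans e₂⟩)
    (fun n ↦ by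
      obtain ⟨e₁⟩ := nonempty_ker_equiv haug haugd hd (G.range_lTensor_d_le_ker (.of R M))
        hac₀ hac₁ n
      obtain ⟨e₂⟩ := G.nonempty_ker_equiv_tor (.of R M) n
      exact ⟨e₁.trans e₂⟩) n 0
  simpa using this

end

theorem stmt_19 (R : Type u) [CommRing R] [IsLocalRing R] [IsNoetherianRing R]
    (M N : ModuleCat.{u} R) [Module.Finite R M] [Module.Finite R N] (n : ℕ) :
    ∑ i ∈ Finset.range (n + 1), betti R i M * betti R (n - i) N ≤
      ∑ i ∈ Finset.range (n + 1),
        betti R (n - i) (((Tor (ModuleCat.{u} R) i).obj M).obj N) := by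
  obtain ⟨F⟩ := nonempty_minimalFreeResolution (R := R) M
  obtain ⟨G⟩ := nonempty_minimalFreeResolution (R := R) N
  simp only [betti_eq_torLength]
  refine le_trans ?_ (sum_rank_mul_rank_le F G n)
  rw [Finset.Nat.sum_antidiagonal_eq_sum_range_succ_mk]
  exact Finset.sum_le_sum fun i _ ↦
    mul_le_mul' (F.torLength_le_rank i) (G.torLength_le_rank (n - i))
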